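/- arXiv:2507.04307 — 2 statements merged into one kernel-verified Lean document; each statement's English description precedes it below -/
import Mathlib

section
/- Let Ω ⊂ ℝ be a bounded open set and λ > π²/|Ω|². Then ∑_{k : λ_k(Ω)<λ} (λ − λ_k(Ω))^{1/2} ≤ (|Ω|/4)λ − √λ/2 + (√6 π/(9|Ω|))·√(⌊|Ω|√λ/π⌋ + 1/2), and in particular this sum is at most (|Ω|/4)λ(1 − 2/(3|Ω|√λ)). -/
open Real MeasureTheory

/-!
Put `R = L √Λ / π` and `f x = √(R² - x²)`. By the lower bound on the eigenvalues, the sum is at most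
`(π / L) ∑_{k=1}^N f k` with `N = ⌊R⌋`. As `f` is concave on `[0, R]`, the trapezoidal rule
with nodes `0, 1, …, N, R` underestimates the quarter-disc area `∫_0^R f = π R² / 4`
(`trapezoid_le`, `integral_quarter_disc`), whence
`∑_{k=1}^N f k ≤ π R² / 4 - R / 2 + (1 - δ) f N / 2` with `δ = R - N ∈ [0, 1)`.
Since `(f N)² = δ (2 N + δ) ≤ 2 δ (N + 1/2)` and `δ (1 - δ)² ≤ 4 / 27` (equality at `δ = 1/3`), the
last term is at most `(√6 / 9) √(N + 1/2)`; this is `sum_sqrt_le`. The second estimate follows from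
the first because `(2 N + 1) / 3 ≤ R²`.
-/

/-- The trapezoidal rule underestimates the integral of the concave function `√(R² - x²)`. -/
lemma trapezoid_le (R a b : ℝ) (ha : 0 ≤ a) (hab : a ≤ b) (hb : b ≤ R) :
    (b - a) * (√(R ^ 2 - a ^ 2) + √(R ^ 2 - b ^ 2)) / 2 ≤ ∫ x in a..b, √(R ^ 2 - x ^ 2) := by
  rcases hab.eq_or_lt with rfl | hlt
  · simp
  have hba : 0 < b - a := sub_pos.2 hlt
  have hu2 := Real.sq_sqrt (show 0 ≤ R ^ 2 - a ^ 2 by nlinarith)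
  have hv2 := Real.sq_sqrt (show 0 ≤ R ^ 2 - b ^ 2 by nlinarith)
  have hu := Real.sqrt_nonneg (R ^ 2 - a ^ 2)
  have hv := Real.sqrt_nonneg (R ^ 2 - b ^ 2)
  set u := √(R ^ 2 - a ^ 2)
  set v := √(R ^ 2 - b ^ 2)
  have hchord : ∫ x in a..b, (u + (v - u) / (b - a) * (x - a)) = (b - a) * (u + v) / 2 := by
    rw [intervalIntegral.integral_add (by simp) (by apply Continuous.intervalIntegrable; fun_prop),
      intervalIntegral.integral_const_mul, intervalIntegral.integral_sub (by simp) (by simp),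
      integral_id]
    simp only [intervalIntegral.integral_const, smul_eq_mul]
    field_simp
    ring
  rw [← hchord]
  apply intervalIntegral.integral_mono_on hab
  · apply Continuous.intervalIntegrable; fun_prop
  · apply Continuous.intervalIntegrable; fun_prop
  intro x hx
  apply Real.le_sqrt_of_sq_le
  obtain ⟨t, ht⟩ : ∃ t, t = (x - a) / (b - a) := ⟨_, rfl⟩
  have ht0 : 0 ≤ t := ht ▸ div_nonneg (sub_nonneg.2 hx.1) hba.le
  have ht1 : t ≤ 1 := by rw [ht, div_le_one hba]; linarith [hx.2]
  have hx' : x = a + t * (b - a) := by rw [ht]; field_simp; ring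
  have hline : u + (v - u) / (b - a) * (x - a) = u + (v - u) * t := by rw [ht]; ring
  rw [hline, hx']
  have h1 : 0 ≤ t * (1 - t) := mul_nonneg ht0 (by linarith)
  -- convexity of the square, applied to `u, v` and to `a, b` with the same weights
  have h2 : (u + (v - u) * t) ^ 2 = u ^ 2 * (1 - t) + v ^ 2 * t - t * (1 - t) * (u - v) ^ 2 := by
    ring
  have h3 : (a + t * (b - a)) ^ 2 = a ^ 2 * (1 - t) + b ^ 2 * t - t * (1 - t) * (a - b) ^ 2 := by
    ring
  rw [h2, h3, hu2, hv2]
  nlinarith [mul_nonneg h1 (sq_nonneg (u - v)), mul_nonneg h1 (sq_nonneg (a - b))]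

lemma integral_quarter_disc (R : ℝ) (hR : 0 < R) :
    ∫ x in (0 : ℝ)..R, √(R ^ 2 - x ^ 2) = π * R ^ 2 / 4 := by
  have hi : ∀ a b : ℝ, IntervalIntegrable (fun x : ℝ => √(1 - x ^ 2)) volume a b := fun a b => by
    apply Continuous.intervalIntegrable; fun_prop
  have h1 : ∫ x in (0 : ℝ)..1, √(1 - x ^ 2) = π / 4 := by
    have h := integral_sqrt_one_sub_sq
    rw [← intervalIntegral.integral_add_adjacent_intervals (hi (-1) 0) (hi 0 1)] at h
    have hs := intervalIntegral.integral_comp_neg (a := 0) (b := 1) (fun x : ℝ => √(1 - x ^ 2))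
    simp only [neg_sq, neg_zero] at hs
    linarith
  have h2 := intervalIntegral.mul_integral_comp_mul_left (a := 0) (b := 1)
    (f := fun x : ℝ => √(R ^ 2 - x ^ 2)) R
  simp only [mul_zero, mul_one] at h2
  rw [← h2]
  have h3 : ∀ x : ℝ, √(R ^ 2 - (R * x) ^ 2) = R * √(1 - x ^ 2) := fun x => by
    rw [show R ^ 2 - (R * x) ^ 2 = R ^ 2 * (1 - x ^ 2) by ring, Real.sqrt_mul (sq_nonneg R),
      Real.sqrt_sq hR.le]
  simp only [h3, intervalIntegral.integral_const_mul, h1]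
  ring

/-- Composite trapezoidal rule with nodes `0, 1, …, n`. -/
lemma sum_le_integral (R : ℝ) (n : ℕ) (hn : (n : ℝ) ≤ R) :
    ∑ k ∈ Finset.range n, √(R ^ 2 - ((k : ℝ) + 1) ^ 2) ≤
      (∫ x in (0 : ℝ)..n, √(R ^ 2 - x ^ 2)) - R / 2 + √(R ^ 2 - (n : ℝ) ^ 2) / 2 := by
  induction n with
  | zero =>
    have : √(R ^ 2) = R := Real.sqrt_sq (by simpa using hn)
    simp [this]
  | succ n ih =>
    push_cast at hn ⊢
    have hi : ∀ a b : ℝ, IntervalIntegrable (fun x : ℝ => √(R ^ 2 - x ^ 2)) volume a b :=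
      fun a b => by apply Continuous.intervalIntegrable; fun_prop
    rw [Finset.sum_range_succ,
      ← intervalIntegral.integral_add_adjacent_intervals (hi 0 n) (hi n (n + 1))]
    have h1 := ih (by linarith)
    have h2 := trapezoid_le R n (n + 1) (by positivity) (by linarith) hn
    have h3 : ((n : ℝ) + 1 - n) = 1 := by ring
    rw [h3] at h2
    linarith

/-- The estimate for the interval of length `π`, with `Λ = R²`. -/
lemma sum_sqrt_le (R : ℝ) (hR : 0 < R) :
    ∑ k ∈ Finset.range ⌊R⌋₊, √(R ^ 2 - ((k : ℝ) + 1) ^ 2) ≤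
      π * R ^ 2 / 4 - R / 2 + √6 / 9 * √((⌊R⌋₊ : ℝ) + 1 / 2) := by
  have hN := Nat.floor_le hR.le
  have hN' := Nat.lt_floor_add_one R
  have hN0 : (0 : ℝ) ≤ (⌊R⌋₊ : ℝ) := Nat.cast_nonneg _
  have h1 := sum_le_integral R _ hN
  have h2 := trapezoid_le R _ R hN0 hN le_rfl
  have hi : ∀ a b : ℝ, IntervalIntegrable (fun x : ℝ => √(R ^ 2 - x ^ 2)) volume a b :=
    fun a b => by apply Continuous.intervalIntegrable; fun_prop
  have h3 := intervalIntegral.integral_add_adjacent_intervals (hi 0 ⌊R⌋₊) (hi ⌊R⌋₊ R)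
  rw [integral_quarter_disc R hR] at h3
  rw [sub_self, Real.sqrt_zero, add_zero] at h2
  generalize (⌊R⌋₊ : ℝ) = N at *
  obtain ⟨δ, hδ⟩ : ∃ δ, δ = R - N := ⟨_, rfl⟩
  have hd0 : 0 ≤ δ := by linarith
  have hd1 : δ ≤ 1 := by linarith
  have hc2 := Real.sq_sqrt (show 0 ≤ R ^ 2 - N ^ 2 by nlinarith)
  have key : (1 - δ) * √(R ^ 2 - N ^ 2) / 2 ≤ √6 / 9 * √(N + 1 / 2) := by
    refine le_of_abs_le (abs_le_of_sq_le_sq ?_ (by positivity))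
    rw [div_pow, mul_pow, mul_pow, div_pow, hc2, Real.sq_sqrt (by norm_num),
      Real.sq_sqrt (by linarith)]
    have hRN : R ^ 2 - N ^ 2 ≤ 2 * δ * (N + 1 / 2) := by
      have : R = N + δ := by linarith
      subst this
      nlinarith
    -- `4/27 - δ (1-δ)² = (1/3 - δ)² (4/3 - δ)`
    have hcub : δ * (1 - δ) ^ 2 ≤ 4 / 27 := by
      nlinarith [mul_nonneg (sq_nonneg (1 / 3 - δ)) (show 0 ≤ 4 / 3 - δ by linarith)]
    have h5 := mul_le_mul_of_nonneg_left hRN (sq_nonneg (1 - δ))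
    have h6 := mul_le_mul_of_nonneg_right hcub (show 0 ≤ N + 1 / 2 by linarith)
    linarith
  rw [hδ] at key
  linarith

/-- For a bounded open `Ω ⊂ ℝ` with `L = |Ω| > 0`, Dirichlet
eigenvalues `lam` in increasing order (`lam k` the (k+1)-th) satisfying
`λ_k ≥ π²k²/L²`, and `Λ > π²/L²`:
`∑_{λ_k<Λ} (Λ-λ_k)^{1/2} ≤ (L/4)Λ - √Λ/2 + (√6 π/(9L))·√(⌊L√Λ/π⌋ + 1/2)`,
and in particular the sum is at most `(L/4)Λ(1 - 2/(3L√Λ))`. -/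
theorem riesz_mean_half_dim_one
    (Ω : Set ℝ) (hΩo : IsOpen Ω) (hΩb : Bornology.IsBounded Ω)
    (L : ℝ) (hL : L = (volume Ω).toReal) (hLpos : 0 < L)
    (lam : ℕ → ℝ) (hmono : Monotone lam)
    (hlam : ∀ k : ℕ, π ^ 2 * ((k : ℝ) + 1) ^ 2 / L ^ 2 ≤ lam k)
    (Λ : ℝ) (hΛ : π ^ 2 / L ^ 2 < Λ) :
    (∑' k : ℕ, Real.sqrt (max (Λ - lam k) 0) ≤
        L / 4 * Λ - Real.sqrt Λ / 2 +
          Real.sqrt 6 * π / (9 * L) *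
            Real.sqrt ((⌊L * Real.sqrt Λ / π⌋₊ : ℝ) + 1 / 2)) ∧
      ∑' k : ℕ, Real.sqrt (max (Λ - lam k) 0) ≤
        L / 4 * Λ * (1 - 2 / (3 * (L * Real.sqrt Λ))) := by
  have hπ := Real.pi_pos
  have hΛ0 : 0 < Λ := lt_trans (by positivity) hΛ
  have hsΛ : 0 < √Λ := Real.sqrt_pos.2 hΛ0
  have hsq := Real.sq_sqrt hΛ0.le
  obtain ⟨R, hR⟩ : ∃ R, R = L * √Λ / π := ⟨_, rfl⟩
  have hs : √Λ = π / L * R := by rw [hR]; field_simp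
  have hΛR : Λ = (π / L) ^ 2 * R ^ 2 := by rw [← hsq, hs]; ring
  have hpL : 0 < π / L := by positivity
  have hR0 : 0 < R := by rw [hR]; positivity
  have hR1 : 1 < R := by
    have h : (π / L) ^ 2 * 1 < (π / L) ^ 2 * R ^ 2 := by rw [← hΛR, mul_one, div_pow]; exact hΛ
    have h' := lt_of_mul_lt_mul_left h (sq_nonneg _)
    nlinarith
  rw [← hR]
  have hdiff : ∀ k : ℕ, Λ - lam k ≤ (π / L) ^ 2 * (R ^ 2 - ((k : ℝ) + 1) ^ 2) := fun k => by
    have h := hlam k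
    have h' : π ^ 2 * ((k : ℝ) + 1) ^ 2 / L ^ 2 = (π / L) ^ 2 * ((k : ℝ) + 1) ^ 2 := by ring
    rw [h'] at h
    linarith
  have hsum : ∑' k : ℕ, √(max (Λ - lam k) 0) ≤
      π / L * ∑ k ∈ Finset.range ⌊R⌋₊, √(R ^ 2 - ((k : ℝ) + 1) ^ 2) := by
    rw [tsum_eq_sum (s := Finset.range ⌊R⌋₊), Finset.mul_sum]
    · apply Finset.sum_le_sum
      intro k _
      calc √(max (Λ - lam k) 0) ≤ √((π / L) ^ 2 * (R ^ 2 - ((k : ℝ) + 1) ^ 2)) := by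
            rcases le_total (Λ - lam k) 0 with h | h
            · rw [max_eq_right h, Real.sqrt_zero]; exact Real.sqrt_nonneg _
            · rw [max_eq_left h]; exact Real.sqrt_le_sqrt (hdiff k)
        _ = π / L * √(R ^ 2 - ((k : ℝ) + 1) ^ 2) := by
            rw [Real.sqrt_mul (sq_nonneg _), Real.sqrt_sq hpL.le]
    · intro k hk
      have hk' : (⌊R⌋₊ : ℝ) ≤ k := by
        exact_mod_cast not_lt.1 (fun h => hk (Finset.mem_range.2 h))
      have hRk : R < (k : ℝ) + 1 := lt_of_lt_of_le (Nat.lt_floor_add_one R) (by linarith)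
      have hneg : R ^ 2 - ((k : ℝ) + 1) ^ 2 ≤ 0 := by nlinarith
      have h := (hdiff k).trans (mul_nonpos_of_nonneg_of_nonpos (sq_nonneg _) hneg)
      rw [max_eq_right h, Real.sqrt_zero]
  have hmain := hsum.trans (mul_le_mul_of_nonneg_left (sum_sqrt_le R hR0) hpL.le)
  have hN := Nat.floor_le hR0.le
  refine ⟨hmain.trans (le_of_eq ?_), hmain.trans ?_⟩
  · rw [hs, hΛR]; field_simp
  · have hrhs : L / 4 * Λ * (1 - 2 / (3 * (L * √Λ))) = π / L * (π * R ^ 2 / 4 - R / 6) := by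
      rw [hs, hΛR]; field_simp; ring
    rw [hrhs]
    apply mul_le_mul_of_nonneg_left _ hpL.le
    have h : √6 / 9 * √((⌊R⌋₊ : ℝ) + 1 / 2) ≤ R / 3 := by
      refine le_of_abs_le (abs_le_of_sq_le_sq ?_ (by positivity))
      rw [mul_pow, div_pow, Real.sq_sqrt (by norm_num), Real.sq_sqrt (by positivity)]
      nlinarith
    linarith
end

section
/- Let Ω₁ ⊂ ℝ^{n₁} (n₁ ≥ 1) satisfy Pólya's conjecture N_{Ω₁}^D(λ) ≤ (|Ω₁|ω(n₁)/(2π)^{n₁}) λ^{n₁/2} for all λ > 0, and Ω₂ ⊂ ℝ bounded open. Then for all λ > 0, N_{Ω₁×Ω₂}^D(λ) ≤ (|Ω₁||Ω₂|ω(n)/(2π)ⁿ) λ^{n/2} (1 − C₁(n₁)/(|Ω₂|√λ))_+, where n = n₁ + 1, and C₁(1) = 2/3, C₁(2) = 3π/16, C₁(n₁) = πB(n₁/2 − 1, 2)/(6B(n₁/2 − 1, 5/2)) for n₁ = 3,4, and C₁(n₁) = (3π B(n₁/2−1,2)/(16 B(n₁/2−1,5/2)))(247/256)^{(n₁−2)/2}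 for n₁ ≥ 5. -/
/-!
Write `m = n₁`, `p = m / 2` and `M = L₂ √Λ / π`. Slicing the joint spectrum along the one-dimensional
factor and using Pólya's bound on every slice gives
`N(Λ) ≤ L₁ ω(m) (2π)⁻ᵐ (π / L₂)ᵐ ∑ₖ (M² - k²)₊ ^ p`, the sum being over `k ≥ 1`. With
`J p = ∫₀¹ (1 - x²)ᵖ dx`, for which `ω(m + 1) = 2 J(m/2) ω(m)`, the theorem becomes the lattice sum
inequality `∑ₖ (M² - k²)₊ ^ p ≤ J p M^(m+1) - c M^m` for `M ≥ 1`, where `c = C₁(m) J(m/2) / π`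
(for `M < 1` the sum is empty).

This inequality holds for every `c ≤ min (1/6) (J p)` (`lattice_sum_le`), by induction `m ↦ m + 2`.
The case `m = 1` is the trapezoidal rule under the quarter circle of radius `M`, which reduces to
`sin x ≤ x` for differences of angles; the case `m = 2` is a sum of squares. In the inductive step,
the difference of the two sides for `m + 2` has derivative `(m + 2) M` times the difference for `m`,
because `(2p + 3) J (p + 1) = (2p + 2) J p`; hence it is monotone on `[1, ∞)`, and at `M = 1` it
equals `J (p + 1) - c ≥ 0`.

Finally `c ≤ min (1/6) (J p)`: the Beta quotients in `C₁` cancel against `J`, leaving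
`c = 1/6, 1/8, 1/9, 1/9` for `m = 1, 2, 3, 4` and `c = (1/8) (247/256)^((m-2)/2)` for `m ≥ 5`, while
`J(m/2)² ≥ (6/5) / (m + 1)`, which beats the exponential by Bernoulli's inequality.
-/

open Real

/-- The volume of the unit ball in `ℝⁿ`: `ω(n) = π^{n/2}/Γ(1 + n/2)`. -/
noncomputable def ballVol (n : ℕ) : ℝ := π ^ ((n : ℝ) / 2) / Real.Gamma ((n : ℝ) / 2 + 1)

/-- The Beta function `B(x,y) = Γ(x)Γ(y)/Γ(x+y)`. -/
noncomputable def betaFn (x y : ℝ) : ℝ :=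
  Real.Gamma x * Real.Gamma y / Real.Gamma (x + y)

/-- The constant `C₁(n₁)` of Jiang–Lin. -/
noncomputable def C₁ (m : ℕ) : ℝ :=
  if m = 1 then 2 / 3
  else if m = 2 then 3 * π / 16
  else if m ≤ 4 then π * betaFn ((m : ℝ) / 2 - 1) 2 / (6 * betaFn ((m : ℝ) / 2 - 1) (5 / 2))
  else 3 * π * betaFn ((m : ℝ) / 2 - 1) 2 / (16 * betaFn ((m : ℝ) / 2 - 1) (5 / 2)) *
    (247 / 256) ^ (((m : ℝ) - 2) / 2)

/-! ### The integrals `∫₀¹ (1 - x²)ᵖ dx` -/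

/-- The number `∫₀¹ (1 - x²)ᵖ dx = B(1/2, p + 1) / 2`, given by its Gamma function expression. -/
noncomputable def capInt (p : ℝ) : ℝ :=
  √π / 2 * Real.Gamma (p + 1) / Real.Gamma (p + 3 / 2)

lemma capInt_pos {p : ℝ} (hp : 0 ≤ p) : 0 < capInt p := by
  have h1 := Real.Gamma_pos_of_pos (by linarith : 0 < p + 1)
  have h2 := Real.Gamma_pos_of_pos (by linarith : 0 < p + 3 / 2)
  unfold capInt
  positivity

lemma capInt_add_one {p : ℝ} (hp : 0 ≤ p) :
    capInt (p + 1) * (2 * p + 3) = (2 * p + 2) * capInt p := by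
  have h2 := Real.Gamma_pos_of_pos (by linarith : 0 < p + 3 / 2)
  have e1 : Real.Gamma (p + 1 + 1) = (p + 1) * Real.Gamma (p + 1) :=
    Real.Gamma_add_one (by linarith)
  have e2 : Real.Gamma (p + 1 + 3 / 2) = (p + 3 / 2) * Real.Gamma (p + 3 / 2) := by
    rw [← Real.Gamma_add_one (by linarith)]; ring_nf
  unfold capInt
  rw [e1, e2]
  have : p + 3 / 2 ≠ 0 := by linarith
  field_simp

lemma gamma_three_half : Real.Gamma (3 / 2) = √π / 2 := by
  have := Real.Gamma_add_one (s := 1 / 2) (by norm_num)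
  rw [Real.Gamma_one_half_eq] at this
  rw [show (3 / 2 : ℝ) = 1 / 2 + 1 by norm_num, this]; ring

lemma gamma_five_half : Real.Gamma (5 / 2) = 3 / 4 * √π := by
  have := Real.Gamma_add_one (s := 3 / 2) (by norm_num)
  rw [gamma_three_half] at this
  rw [show (5 / 2 : ℝ) = 3 / 2 + 1 by norm_num, this]; ring

lemma capInt_half : capInt (1 / 2) = π / 4 := by
  unfold capInt
  rw [show (1 / 2 + 1 : ℝ) = 3 / 2 by norm_num, show (1 / 2 + 3 / 2 : ℝ) = 2 by norm_num,
    gamma_three_half, Real.Gamma_two]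
  have := Real.mul_self_sqrt Real.pi_pos.le
  linear_combination this / 4

lemma capInt_one : capInt 1 = 2 / 3 := by
  unfold capInt
  rw [show (1 + 1 : ℝ) = 2 by norm_num, show (1 + 3 / 2 : ℝ) = 5 / 2 by norm_num,
    gamma_five_half, Real.Gamma_two]
  have := Real.sqrt_pos.2 Real.pi_pos
  field_simp
  norm_num

/-- The recurrence for `capInt` makes `(2p + 1) (capInt p)²` nondecreasing along `p ↦ p + 1`. -/
lemma capInt_sq_lower : ∀ m : ℕ, 1 ≤ m → 6 / 5 ≤ ((m : ℝ) + 1) * capInt ((m : ℝ) / 2) ^ 2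
  | 0, h => by omega
  | 1, _ => by
      have := Real.pi_gt_d2
      norm_num [capInt_half]
      nlinarith
  | 2, _ => by norm_num [capInt_one]
  | m + 3, _ => by
      have ih := capInt_sq_lower (m + 1) (by omega)
      have hr := capInt_add_one (p := ((m + 1 : ℕ) : ℝ) / 2) (by positivity)
      have he : ((m + 3 : ℕ) : ℝ) / 2 = ((m + 1 : ℕ) : ℝ) / 2 + 1 := by push_cast; ring
      rw [he]
      set a := capInt (((m + 1 : ℕ) : ℝ) / 2)
      set b := capInt (((m + 1 : ℕ) : ℝ) / 2 + 1)
      push_cast at hr ih ⊢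
      have hm : (0 : ℝ) ≤ m := m.cast_nonneg
      have hb : b = ((m : ℝ) + 3) * a / (m + 4) := by
        rw [eq_div_iff (by positivity)]; linear_combination hr
      have : ((m : ℝ) + 1 + 1) * a ^ 2 ≤ ((m : ℝ) + 3 + 1) * b ^ 2 := by
        rw [hb, div_pow, ← mul_div_assoc, le_div_iff₀ (by positivity)]
        nlinarith [mul_nonneg (by positivity : (0 : ℝ) ≤ m + 4) (sq_nonneg a)]
      linarith

/-- `(1/8) (247/256)^((m-2)/2) ≤ ∫₀¹ (1 - x²)^(m/2) dx`. -/
lemma exp_le_capInt (m : ℕ) (hm : 2 ≤ m) :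
    1 / 8 * (247 / 256 : ℝ) ^ (((m : ℝ) - 2) / 2) ≤ capInt ((m : ℝ) / 2) := by
  obtain ⟨j, rfl⟩ := Nat.exists_eq_add_of_le hm
  have hJ := capInt_sq_lower (2 + j) (by omega)
  apply le_of_sq_le_sq _ (capInt_pos (by positivity)).le
  have e : ((247 / 256 : ℝ) ^ ((((2 + j : ℕ) : ℝ) - 2) / 2)) ^ 2 = (247 / 256 : ℝ) ^ j := by
    rw [← Real.rpow_natCast, ← Real.rpow_mul (by norm_num), ← Real.rpow_natCast]
    congr 1
    push_cast
    ring
  rw [mul_pow, e]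
  have hB : 1 + (j : ℝ) * (9 / 247) ≤ (256 / 247 : ℝ) ^ j := by
    have := one_add_mul_le_pow (a := (9 / 247 : ℝ)) (by norm_num) j
    norm_num at this ⊢
    linarith
  have hprod : (247 / 256 : ℝ) ^ j * (256 / 247 : ℝ) ^ j = 1 := by
    rw [← mul_pow]; norm_num
  have hx : (0 : ℝ) < (247 / 256 : ℝ) ^ j := by positivity
  set x := (247 / 256 : ℝ) ^ j
  have hxj : x * (1 + (j : ℝ) * (9 / 247)) ≤ 1 :=
    (mul_le_mul_of_nonneg_left hB hx.le).trans_eq hprod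
  push_cast at hJ ⊢
  have hj : (0 : ℝ) ≤ j := j.cast_nonneg
  refine le_of_mul_le_mul_left (le_trans ?_ hJ) (by positivity : (0 : ℝ) < 2 + j + 1)
  nlinarith [mul_nonneg hx.le hj]

/-! ### The lattice sum inequality -/

/-- Away from the origin this is the usual power rule; at the origin both one-sided derivatives
vanish because `q > 1`. -/
lemma hasDerivAt_posPart_rpow {q : ℝ} (hq : 1 < q) (y : ℝ) :
    HasDerivAt (fun y : ℝ => (max y 0) ^ q) (q * (max y 0) ^ (q - 1)) y := by
  rcases lt_trichotomy y 0 with h | h | h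
  · rw [max_eq_right h.le, Real.zero_rpow (by linarith), mul_zero]
    refine (hasDerivAt_const y (0 : ℝ)).congr_of_eventuallyEq ?_
    filter_upwards [Iio_mem_nhds h] with z hz
    rw [max_eq_right (le_of_lt hz), Real.zero_rpow (by linarith)]
  · subst h
    rw [max_self, ← hasDerivWithinAt_univ, ← Set.Iic_union_Ici (a := (0 : ℝ))]
    refine HasDerivWithinAt.union ?_ ?_
    · rw [Real.zero_rpow (by linarith), mul_zero]
      refine (hasDerivWithinAt_const (0 : ℝ) _ (0 : ℝ)).congr (fun z hz => ?_) ?_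
      · rw [max_eq_right hz, Real.zero_rpow (by linarith)]
      · rw [max_self, Real.zero_rpow (by linarith)]
    · refine ((Real.hasDerivAt_rpow_const (x := 0) (p := q) (Or.inr hq.le)).hasDerivWithinAt).congr
        (fun z hz => ?_) ?_
      · rw [max_eq_left hz]
      · rw [max_self]
  · rw [max_eq_left h.le]
    refine (Real.hasDerivAt_rpow_const (x := y) (p := q) (Or.inr hq.le)).congr_of_eventuallyEq ?_
    filter_upwards [Ioi_mem_nhds h] with z hz
    rw [max_eq_left (le_of_lt hz)]

/-- Since only the indices `k + 1 ≤ M` contribute, any truncation is at most the one at `⌊M⌋`. -/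
lemma sum_le_sum_floor {p : ℝ} (hp : 0 < p) {M : ℝ} (hM : 0 ≤ M) (N : ℕ) :
    ∑ k ∈ Finset.range N, (max (M ^ 2 - ((k : ℝ) + 1) ^ 2) 0) ^ p ≤
      ∑ k ∈ Finset.range ⌊M⌋₊, (M ^ 2 - ((k : ℝ) + 1) ^ 2) ^ p := by
  calc ∑ k ∈ Finset.range N, (max (M ^ 2 - ((k : ℝ) + 1) ^ 2) 0) ^ p
      ≤ ∑ k ∈ Finset.range ⌊M⌋₊, (max (M ^ 2 - ((k : ℝ) + 1) ^ 2) 0) ^ p := by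
        refine (Finset.sum_le_sum_of_subset_of_nonneg
          (Finset.range_mono (le_max_left N ⌊M⌋₊)) fun k _ _ => by positivity).trans_eq ?_
        refine (Finset.sum_subset (Finset.range_mono (le_max_right N ⌊M⌋₊)) fun k _ hlt => ?_).symm
        rw [Finset.mem_range] at hlt
        have h1 : M < ((k + 1 : ℕ) : ℝ) := (Nat.floor_lt hM).1 (by omega)
        push_cast at h1
        rw [max_eq_right (by nlinarith), Real.zero_rpow hp.ne']
    _ = _ := by
        refine Finset.sum_congr rfl fun k hk => ?_
        rw [Finset.mem_range] at hk
        have h1 : ((k + 1 : ℕ) : ℝ) ≤ M := (Nat.le_floor_iff hM).1 hk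
        push_cast at h1
        rw [max_eq_left]
        have : (0 : ℝ) ≤ k := k.cast_nonneg
        nlinarith

/-- Trapezoidal rule under the circle of radius `M`: the right-hand side is the area under the
arc over `[0, K]`, minus the boundary correction `(M - √(M² - K²)) / 2`. -/
lemma circle_trapezoid {M : ℝ} (hM : 0 < M) (K : ℕ) (hK : (K : ℝ) ≤ M) :
    ∑ k ∈ Finset.range K, √(M ^ 2 - ((k : ℝ) + 1) ^ 2) ≤
      K * √(M ^ 2 - (K : ℝ) ^ 2) / 2 + M ^ 2 * arcsin (K / M) / 2
        - M / 2 + √(M ^ 2 - (K : ℝ) ^ 2) / 2 := by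
  induction K with
  | zero => simp [Real.sqrt_sq hM.le]
  | succ K ih =>
    push_cast at hK
    have hK0 : (0 : ℝ) ≤ K := K.cast_nonneg
    have ih' := ih (by linarith)
    rw [Finset.sum_range_succ]
    push_cast
    have hcos : ∀ t : ℝ, M * cos (arcsin (t / M)) = √(M ^ 2 - t ^ 2) := by
      intro t
      rw [Real.cos_arcsin]
      nth_rewrite 1 [← Real.sqrt_sq hM.le]
      rw [← Real.sqrt_mul (by positivity)]
      congr 1
      field_simp
    have hsin : ∀ t : ℝ, 0 ≤ t → t ≤ M → M * sin (arcsin (t / M)) = t := by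
      intro t h0 h1
      rw [Real.sin_arcsin (by linarith [div_nonneg h0 hM.le]) ((div_le_one hM).2 h1)]
      field_simp
    have hca := hcos K
    have hcb := hcos (K + 1)
    have hsa := hsin K hK0 (by linarith)
    have hsb := hsin (K + 1) (by linarith) hK
    set α := arcsin (K / M)
    set β := arcsin (((K : ℝ) + 1) / M)
    have hαβ : α ≤ β := Real.monotone_arcsin (by gcongr; linarith)
    -- The trapezoid lies below the arc exactly because `sin (β - α) ≤ β - α`.
    have hs := Real.sin_le (by linarith : 0 ≤ β - α)
    rw [Real.sin_sub] at hs
    set u := √(M ^ 2 - (K : ℝ) ^ 2)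
    set v := √(M ^ 2 - ((K : ℝ) + 1) ^ 2)
    have h1 : ((K : ℝ) + 1) * u - v * K = M ^ 2 * (sin β * cos α - cos β * sin α) := by
      rw [← hca, ← hcb]
      linear_combination (-(M * cos α)) * hsb + (M * cos β) * hsa
    have h2 := mul_le_mul_of_nonneg_left hs (sq_nonneg M)
    rw [← h1] at h2
    nlinarith

lemma lattice_sum_le_one {M : ℝ} (hM : 1 ≤ M) (N : ℕ) :
    ∑ k ∈ Finset.range N, (max (M ^ 2 - ((k : ℝ) + 1) ^ 2) 0) ^ (1 / 2 : ℝ) ≤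
      π / 4 * M ^ 2 - 1 / 6 * M := by
  have hM0 : 0 < M := by linarith
  refine (sum_le_sum_floor (by norm_num) hM0.le N).trans ?_
  simp_rw [← Real.sqrt_eq_rpow]
  have hK1 : (1 : ℝ) ≤ (⌊M⌋₊ : ℝ) := by exact_mod_cast (Nat.one_le_floor_iff M).2 hM
  have hKM := Nat.floor_le hM0.le
  have hKlt := Nat.lt_floor_add_one M
  refine (circle_trapezoid hM0 _ hKM).trans ?_
  set K : ℝ := (⌊M⌋₊ : ℝ)
  set g := √(M ^ 2 - K ^ 2) with hg
  have hg0 : 0 ≤ g := Real.sqrt_nonneg _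
  have hgsq : g ^ 2 = M ^ 2 - K ^ 2 := Real.sq_sqrt (by nlinarith)
  -- The remaining piece of the quarter disc contains the triangle over `[K, M]`.
  have htail : M ^ 2 * arcsin (K / M) ≤ M ^ 2 * (π / 2) - M * g := by
    have h := Real.sin_le (x := π / 2 - arcsin (K / M))
      (by linarith [Real.arcsin_le_pi_div_two (K / M)])
    rw [Real.sin_pi_div_two_sub, Real.cos_arcsin] at h
    have e : M * √(1 - (K / M) ^ 2) = g := by
      rw [hg]
      nth_rewrite 1 [← Real.sqrt_sq hM0.le]
      rw [← Real.sqrt_mul (by positivity)]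
      congr 1
      field_simp
    rw [← e]
    nlinarith [mul_le_mul_of_nonneg_left h (sq_nonneg M)]
  have hbd : g * (1 - (M - K)) ≤ 2 / 3 * M := by
    apply le_of_sq_le_sq _ (by linarith)
    rw [mul_pow, hgsq]
    obtain ⟨d, hd⟩ : ∃ d, d = M - K := ⟨_, rfl⟩
    have hMe : M = K + d := by linarith
    have hd0 : 0 ≤ d := by linarith
    have hd1 : d ≤ 1 := by linarith
    -- `4/27` is the maximum of `d (1 - d)²` on `[0, 1]`, attained at `d = 1/3`.
    have h27 : d * (1 - d) ^ 2 ≤ 4 / 27 := by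
      nlinarith [mul_nonneg (by linarith : 0 ≤ 4 / 3 - d) (sq_nonneg (d - 1 / 3))]
    rw [← hd, hMe]
    have := mul_le_mul_of_nonneg_right h27 (by linarith : 0 ≤ 2 * K + d)
    nlinarith
  nlinarith

lemma lattice_sum_le_two {M : ℝ} (hM : 1 ≤ M) (N : ℕ) :
    ∑ k ∈ Finset.range N, (max (M ^ 2 - ((k : ℝ) + 1) ^ 2) 0) ^ (1 : ℝ) ≤
      2 / 3 * M ^ 3 - 1 / 6 * M ^ 2 := by
  have hM0 : 0 < M := by linarith
  refine (sum_le_sum_floor (by norm_num) hM0.le N).trans ?_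
  simp_rw [Real.rpow_one]
  have hsum : ∀ K : ℕ, ∑ k ∈ Finset.range K, (M ^ 2 - ((k : ℝ) + 1) ^ 2) =
      K * M ^ 2 - K * (K + 1) * (2 * K + 1) / 6 := by
    intro K
    induction K with
    | zero => simp
    | succ K ih => rw [Finset.sum_range_succ, ih]; push_cast; ring
  rw [hsum]
  have hK1 : (1 : ℝ) ≤ (⌊M⌋₊ : ℝ) := by exact_mod_cast (Nat.one_le_floor_iff M).2 hM
  have hKM := Nat.floor_le hM0.le
  have hKlt := Nat.lt_floor_add_one M
  set K : ℝ := (⌊M⌋₊ : ℝ)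
  obtain ⟨d, hd⟩ : ∃ d, d = M - K := ⟨_, rfl⟩
  have hMe : M = K + d := by linarith
  have hd0 : 0 ≤ d := by linarith
  have hd1 : d ≤ 1 := by linarith
  have h1 : 0 ≤ K * (d ^ 2 - d / 3 + 1 / 6) :=
    mul_nonneg (by linarith) (by nlinarith [sq_nonneg (d - 1 / 6)])
  have h2 : 0 ≤ d ^ 3 := by positivity
  rw [hMe]
  nlinarith

/-- The lattice sum falls short of `∫₀^M (M² - t²)^(m/2) dt` by at least `c M^m`. -/
lemma lattice_sum_le : ∀ m : ℕ, 1 ≤ m → ∀ c : ℝ, c ≤ 1 / 6 → c ≤ capInt ((m : ℝ) / 2) →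
    ∀ M : ℝ, 1 ≤ M → ∀ N : ℕ,
    ∑ k ∈ Finset.range N, (max (M ^ 2 - ((k : ℝ) + 1) ^ 2) 0) ^ ((m : ℝ) / 2) ≤
      capInt ((m : ℝ) / 2) * M ^ (m + 1) - c * M ^ m
  | 0, h => by omega
  | 1, _ => by
      intro c hc _ M hM N
      have := lattice_sum_le_one hM N
      rw [Nat.cast_one, capInt_half]
      norm_num at this ⊢
      nlinarith
  | 2, _ => by
      intro c hc _ M hM N
      have := lattice_sum_le_two hM N
      rw [Nat.cast_two, div_self two_ne_zero, capInt_one]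
      norm_num at this ⊢
      nlinarith [sq_nonneg M]
  | m + 3, _ => by
      intro c hc hcJ M hM N
      have hp0 : (0 : ℝ) ≤ ((m + 1 : ℕ) : ℝ) / 2 := by positivity
      have hr := capInt_add_one hp0
      have he : ((m + 3 : ℕ) : ℝ) / 2 = ((m + 1 : ℕ) : ℝ) / 2 + 1 := by push_cast; ring
      rw [he] at hcJ ⊢
      have hcJ' : c ≤ capInt (((m + 1 : ℕ) : ℝ) / 2) := by
        have := capInt_pos (p := ((m + 1 : ℕ) : ℝ) / 2 + 1) (by linarith)
        have := capInt_pos hp0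
        nlinarith
      have ih := lattice_sum_le (m + 1) (by omega) c hc hcJ'
      have hp1 : (1 : ℝ) < ((m + 1 : ℕ) : ℝ) / 2 + 1 := by
        have : (0 : ℝ) < ((m + 1 : ℕ) : ℝ) / 2 := by positivity
        linarith
      have h2p : 2 * (((m + 1 : ℕ) : ℝ) / 2) = m + 1 := by push_cast; ring
      set p : ℝ := ((m + 1 : ℕ) : ℝ) / 2 with hp
      set F : ℝ → ℝ := fun x => capInt (p + 1) * x ^ (m + 4) - c * x ^ (m + 3) -
        ∑ k ∈ Finset.range N, (max (x ^ 2 - ((k : ℝ) + 1) ^ 2) 0) ^ (p + 1) with hF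
      have hder : ∀ x : ℝ, HasDerivAt F (((m : ℝ) + 3) * x * (capInt p * x ^ (m + 1 + 1) -
          c * x ^ (m + 1) - ∑ k ∈ Finset.range N, (max (x ^ 2 - ((k : ℝ) + 1) ^ 2) 0) ^ p)) x := by
        intro x
        have hs : HasDerivAt (fun x : ℝ => ∑ k ∈ Finset.range N,
            (max (x ^ 2 - ((k : ℝ) + 1) ^ 2) 0) ^ (p + 1))
            (∑ k ∈ Finset.range N, ((p + 1) *
              (max (x ^ 2 - ((k : ℝ) + 1) ^ 2) 0) ^ (p + 1 - 1)) * (2 * x)) x := by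
          refine HasDerivAt.fun_sum fun k _ => ?_
          have hin : HasDerivAt (fun x : ℝ => x ^ 2 - ((k : ℝ) + 1) ^ 2) (2 * x) x := by
            simpa using (hasDerivAt_pow 2 x).sub_const (((k : ℝ) + 1) ^ 2)
          exact (hasDerivAt_posPart_rpow hp1 (x ^ 2 - ((k : ℝ) + 1) ^ 2)).comp x hin
        have h := (((hasDerivAt_pow (m + 4) x).const_mul (capInt (p + 1))).sub
          ((hasDerivAt_pow (m + 3) x).const_mul c)).sub hs
        refine h.congr_deriv ?_
        rw [← Finset.sum_mul, ← Finset.mul_sum, add_sub_cancel_right]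
        rw [show m + 4 - 1 = m + 3 by omega, show m + 3 - 1 = m + 2 by omega]
        push_cast
        rw [show 2 * p = m + 1 from h2p] at hr
        set S := ∑ k ∈ Finset.range N, (max (x ^ 2 - ((k : ℝ) + 1) ^ 2) 0) ^ p
        linear_combination (x ^ (m + 3)) * hr - S * x * h2p
      have hmono : MonotoneOn F (Set.Ici 1) := by
        apply monotoneOn_of_deriv_nonneg (convex_Ici 1)
        · exact fun x _ => (hder x).continuousAt.continuousWithinAt
        · exact fun x _ => (hder x).differentiableAt.differentiableWithinAt
        · intro x hx
          rw [interior_Ici, Set.mem_Ioi] at hx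
          rw [(hder x).deriv]
          have := ih x hx.le N
          exact mul_nonneg (mul_nonneg (by positivity) (by linarith)) (by linarith)
      have h1 : 0 ≤ F 1 := by
        have : ∑ k ∈ Finset.range N, (max ((1 : ℝ) ^ 2 - ((k : ℝ) + 1) ^ 2) 0) ^ (p + 1) = 0 := by
          refine Finset.sum_eq_zero fun k _ => ?_
          have : (0 : ℝ) ≤ k := k.cast_nonneg
          rw [max_eq_right (by nlinarith), Real.zero_rpow (by linarith)]
        simp only [hF, this]
        simp only [one_pow]
        linarith
      have h2 := hmono (Set.mem_Ici.2 le_rfl) (Set.mem_Ici.2 hM) hM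
      have h3 : 0 ≤ F M := h1.trans h2
      simp only [hF] at h3
      linarith

/-! ### The constant `C₁` -/

lemma ballVol_succ (m : ℕ) : ballVol (m + 1) = ballVol m * (2 * capInt ((m : ℝ) / 2)) := by
  have h1 := Real.Gamma_pos_of_pos (by positivity : 0 < (m : ℝ) / 2 + 1)
  have e1 : ((m + 1 : ℕ) : ℝ) / 2 + 1 = (m : ℝ) / 2 + 3 / 2 := by push_cast; ring
  have e2 : π ^ (((m + 1 : ℕ) : ℝ) / 2) = π ^ ((m : ℝ) / 2) * √π := by
    rw [Real.sqrt_eq_rpow, ← Real.rpow_add Real.pi_pos]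
    congr 1
    push_cast
    ring
  unfold ballVol capInt
  rw [e1, e2]
  field_simp

lemma capInt_mul_beta {m : ℕ} (hm : 3 ≤ m) :
    betaFn ((m : ℝ) / 2 - 1) 2 / betaFn ((m : ℝ) / 2 - 1) (5 / 2) * capInt ((m : ℝ) / 2)
      = 2 / 3 := by
  have hm' : (3 : ℝ) ≤ m := by exact_mod_cast hm
  have h0 := Real.Gamma_pos_of_pos (by linarith : 0 < (m : ℝ) / 2 - 1)
  have h1 := Real.Gamma_pos_of_pos (by linarith : 0 < (m : ℝ) / 2 + 1)
  have h2 := Real.Gamma_pos_of_pos (by linarith : 0 < (m : ℝ) / 2 + 3 / 2)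
  have h3 := Real.sqrt_pos.2 Real.pi_pos
  unfold betaFn capInt
  rw [Real.Gamma_two, gamma_five_half, show (m : ℝ) / 2 - 1 + 2 = (m : ℝ) / 2 + 1 by ring,
    show (m : ℝ) / 2 - 1 + 5 / 2 = (m : ℝ) / 2 + 3 / 2 by ring]
  generalize Real.Gamma ((m : ℝ) / 2 - 1) = x at h0 ⊢
  field_simp
  norm_num

lemma C₁_bounds (m : ℕ) (hm : 1 ≤ m) :
    C₁ m * capInt ((m : ℝ) / 2) / π ≤ 1 / 6 ∧
      C₁ m * capInt ((m : ℝ) / 2) / π ≤ capInt ((m : ℝ) / 2) := by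
  have hπ := Real.pi_pos
  have hπ3 := Real.pi_gt_three
  by_cases h1 : m = 1
  · subst h1
    have e : C₁ 1 * capInt (((1 : ℕ) : ℝ) / 2) / π = 1 / 6 := by
      rw [Nat.cast_one, capInt_half]; simp only [C₁, if_true]; field_simp; norm_num
    rw [e, Nat.cast_one, capInt_half]
    exact ⟨le_rfl, by linarith⟩
  by_cases h2 : m = 2
  · subst h2
    have e : C₁ 2 * capInt (((2 : ℕ) : ℝ) / 2) / π = 1 / 8 := by
      rw [Nat.cast_two, div_self two_ne_zero, capInt_one]; simp only [C₁]; norm_num; field_simp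
      norm_num
    rw [e, Nat.cast_two, div_self two_ne_zero, capInt_one]
    norm_num
  have hb := capInt_mul_beta (m := m) (by omega)
  by_cases h4 : m ≤ 4
  · have e : C₁ m * capInt ((m : ℝ) / 2) / π = 1 / 9 := by
      simp only [C₁, if_neg h1, if_neg h2, if_pos h4]
      rw [div_eq_iff hπ.ne']
      linear_combination (π / 6) * hb
    rw [e]
    refine ⟨by norm_num, le_of_sq_le_sq ?_ (capInt_pos (by positivity)).le⟩
    have hs := capInt_sq_lower m hm
    have hm4 : (m : ℝ) ≤ 4 := by exact_mod_cast h4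
    nlinarith [sq_nonneg (capInt ((m : ℝ) / 2))]
  · have e : C₁ m * capInt ((m : ℝ) / 2) / π = 1 / 8 * (247 / 256 : ℝ) ^ (((m : ℝ) - 2) / 2) := by
      simp only [C₁, if_neg h1, if_neg h2, if_neg h4]
      rw [div_eq_iff hπ.ne']
      linear_combination (3 * π / 16 * (247 / 256 : ℝ) ^ (((m : ℝ) - 2) / 2)) * hb
    have hm5 : (5 : ℝ) ≤ m := by exact_mod_cast (by omega : 5 ≤ m)
    rw [e]
    refine ⟨?_, exp_le_capInt m (by omega)⟩
    have := Real.rpow_le_one (x := 247 / 256) (z := ((m : ℝ) - 2) / 2) (by norm_num) (by norm_num)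
      (by linarith)
    linarith

/-! ### Counting eigenvalues of the product -/

/-- A Pólya-type bound, which tends to `0` with the threshold, excludes nonpositive eigenvalues. -/
lemma eigenvalue_pos {m : ℕ} (hm : 1 ≤ m) {C : ℝ} (lam : ℕ → ℝ)
    (hfin : ∀ Λ : ℝ, {k : ℕ | lam k < Λ}.Finite)
    (hP : ∀ Λ : ℝ, 0 < Λ → (Nat.card {k : ℕ // lam k < Λ} : ℝ) ≤ C * Λ ^ ((m : ℝ) / 2))
    (k : ℕ) : 0 < lam k := by
  by_contra! hk
  have hm0 : (0 : ℝ) < (m : ℝ) / 2 := by positivity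
  have hcont : Filter.Tendsto (fun x : ℝ => C * x ^ ((m : ℝ) / 2)) (nhdsWithin 0 (Set.Ioi 0))
      (nhds 0) := by
    have h : ContinuousAt (fun x : ℝ => C * x ^ ((m : ℝ) / 2)) 0 :=
      continuousAt_const.mul (Real.continuousAt_rpow_const _ _ (Or.inr hm0.le))
    have h' := h.tendsto
    rw [Real.zero_rpow hm0.ne', mul_zero] at h'
    exact h'.mono_left nhdsWithin_le_nhds
  obtain ⟨x, hx1, hx0⟩ :=
    ((hcont.eventually (gt_mem_nhds one_pos)).and self_mem_nhdsWithin).exists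
  have hx0' : 0 < x := hx0
  have : Finite {k : ℕ // lam k < x} := (hfin x).to_subtype
  have : Nonempty {k : ℕ // lam k < x} := ⟨⟨k, by linarith⟩⟩
  have h1 : (1 : ℝ) ≤ (Nat.card {k : ℕ // lam k < x} : ℝ) := by
    exact_mod_cast Nat.card_pos
  linarith [hP x hx0']

/-- Slicing the joint spectrum along the second factor. -/
lemma card_le_sum {m : ℕ} (hm : 1 ≤ m) {C L₂ : ℝ} (hL₂ : 0 < L₂) (lam1 lam2 : ℕ → ℝ)
    (hfin : ∀ Λ : ℝ, {k : ℕ | lam1 k < Λ}.Finite)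
    (hP : ∀ Λ : ℝ, 0 < Λ → (Nat.card {k : ℕ // lam1 k < Λ} : ℝ) ≤ C * Λ ^ ((m : ℝ) / 2))
    (hlam2 : ∀ k : ℕ, π ^ 2 * ((k : ℝ) + 1) ^ 2 / L₂ ^ 2 ≤ lam2 k) (Λ : ℝ) :
    ∃ N : ℕ, (Nat.card {q : ℕ × ℕ // lam1 q.1 + lam2 q.2 < Λ} : ℝ) ≤
      ∑ k ∈ Finset.range N,
        C * (max (Λ - π ^ 2 * ((k : ℝ) + 1) ^ 2 / L₂ ^ 2) 0) ^ ((m : ℝ) / 2) := by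
  have hpos := eigenvalue_pos hm lam1 hfin hP
  have hm0 : (0 : ℝ) < (m : ℝ) / 2 := by positivity
  obtain ⟨N, hN⟩ := exists_nat_ge (Λ / (π ^ 2 / L₂ ^ 2))
  refine ⟨N, ?_⟩
  set b : ℕ → ℝ := fun k => Λ - π ^ 2 * ((k : ℝ) + 1) ^ 2 / L₂ ^ 2 with hb
  set T : Finset (ℕ × ℕ) := (Finset.range N).biUnion
    fun k => (hfin (b k)).toFinset.image fun j => (j, k) with hT
  have hsub : {q : ℕ × ℕ | lam1 q.1 + lam2 q.2 < Λ} ⊆ (T : Set (ℕ × ℕ)) := by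
    rintro ⟨j, k⟩ hq
    simp only [Set.mem_ofPred_eq] at hq
    have hl := hlam2 k
    have hj : lam1 j < b k := by simp only [hb]; linarith
    have hk : k < N := by
      by_contra! hk
      have h1 : (N : ℝ) ≤ k := by exact_mod_cast hk
      have h2 : Λ ≤ N * (π ^ 2 / L₂ ^ 2) := (div_le_iff₀ (by positivity)).1 hN
      have h3 : (N : ℝ) * (π ^ 2 / L₂ ^ 2) ≤ ((k : ℝ) + 1) ^ 2 * (π ^ 2 / L₂ ^ 2) := by
        gcongr
        have : (0 : ℝ) ≤ k := k.cast_nonneg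
        nlinarith
      have h4 : ((k : ℝ) + 1) ^ 2 * (π ^ 2 / L₂ ^ 2) = π ^ 2 * ((k : ℝ) + 1) ^ 2 / L₂ ^ 2 := by
        ring
      linarith [hpos j]
    simp only [hT, Finset.coe_biUnion, Set.mem_iUnion, Finset.mem_coe, Finset.mem_image,
      Set.Finite.mem_toFinset, Finset.mem_range]
    exact ⟨k, hk, j, hj, rfl⟩
  have hcard : Nat.card {q : ℕ × ℕ // lam1 q.1 + lam2 q.2 < Λ} ≤
      ∑ k ∈ Finset.range N, (hfin (b k)).toFinset.card := by
    calc Nat.card {q : ℕ × ℕ // lam1 q.1 + lam2 q.2 < Λ}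
        = {q : ℕ × ℕ | lam1 q.1 + lam2 q.2 < Λ}.ncard := rfl
      _ ≤ (T : Set (ℕ × ℕ)).ncard := Set.ncard_le_ncard hsub T.finite_toSet
      _ = T.card := Set.ncard_coe_finset T
      _ ≤ _ := Finset.card_biUnion_le
      _ ≤ _ := Finset.sum_le_sum fun k _ => Finset.card_image_le
  have hcard' : (Nat.card {q : ℕ × ℕ // lam1 q.1 + lam2 q.2 < Λ} : ℝ) ≤
      ∑ k ∈ Finset.range N, ((hfin (b k)).toFinset.card : ℝ) := by exact_mod_cast hcard
  refine hcard'.trans (Finset.sum_le_sum fun k _ => ?_)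
  have hc : (hfin (b k)).toFinset.card = Nat.card {j : ℕ // lam1 j < b k} :=
    (Set.ncard_eq_toFinset_card _ (hfin (b k))).symm
  change _ ≤ C * (max (b k) 0) ^ ((m : ℝ) / 2)
  rcases lt_or_ge 0 (b k) with h | h
  · rw [hc, max_eq_left h.le]
    exact hP _ h
  · have : (hfin (b k)).toFinset = ∅ := by
      ext j
      simp only [Set.Finite.mem_toFinset, Set.mem_ofPred_eq, Finset.notMem_empty, iff_false, not_lt]
      linarith [hpos j]
    rw [this, max_eq_right h, Real.zero_rpow hm0.ne']
    simp

/-- Let `Ω₁ ⊂ ℝ^{n₁}` (`n₁ ≥ 1`) be bounded open of measure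
`L₁ > 0` whose Dirichlet eigenvalues `lam1` (increasing, finitely many below
any threshold) satisfy Pólya's conjecture
`N_{Ω₁}^D(Λ) ≤ (L₁ ω(n₁)/(2π)^{n₁}) Λ^{n₁/2}`, and `Ω₂ ⊂ ℝ` bounded open of
measure `L₂ > 0` with eigenvalues `lam2` satisfying `λ_j ≥ π²j²/L₂²`.  Then
for all `Λ > 0`, with `n = n₁ + 1`,
`N_{Ω₁×Ω₂}^D(Λ) ≤ (L₁L₂ ω(n)/(2π)ⁿ) Λ^{n/2} (1 - C₁(n₁)/(L₂√Λ))_+`. -/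
theorem product_counting_general
    (n₁ : ℕ) (hn₁ : 1 ≤ n₁)
    (Ω₁ : Set (EuclideanSpace ℝ (Fin n₁))) (h1o : IsOpen Ω₁)
    (h1b : Bornology.IsBounded Ω₁)
    (Ω₂ : Set ℝ) (h2o : IsOpen Ω₂) (h2b : Bornology.IsBounded Ω₂)
    (L₁ L₂ : ℝ) (hL₁ : L₁ = (MeasureTheory.volume Ω₁).toReal)
    (hL₂ : L₂ = (MeasureTheory.volume Ω₂).toReal)
    (hL₁pos : 0 < L₁) (hL₂pos : 0 < L₂)
    (lam1 lam2 : ℕ → ℝ) (hmono1 : Monotone lam1) (hmono2 : Monotone lam2)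
    (hfin1 : ∀ Λ : ℝ, {k : ℕ | lam1 k < Λ}.Finite)
    (hP1 : ∀ Λ : ℝ, 0 < Λ →
      (Nat.card {k : ℕ // lam1 k < Λ} : ℝ) ≤
        L₁ * ballVol n₁ / (2 * π) ^ n₁ * Λ ^ ((n₁ : ℝ) / 2))
    (hlam2 : ∀ k : ℕ, π ^ 2 * ((k : ℝ) + 1) ^ 2 / L₂ ^ 2 ≤ lam2 k)
    (Λ : ℝ) (hΛ : 0 < Λ) :
    (Nat.card {q : ℕ × ℕ // lam1 q.1 + lam2 q.2 < Λ} : ℝ) ≤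
      L₁ * L₂ * ballVol (n₁ + 1) / (2 * π) ^ (n₁ + 1) * Λ ^ (((n₁ : ℝ) + 1) / 2) *
        max (1 - C₁ n₁ / (L₂ * Real.sqrt Λ)) 0 := by
  have hπ := Real.pi_pos
  obtain ⟨hc1, hc2⟩ := C₁_bounds n₁ hn₁
  have hlat := lattice_sum_le n₁ hn₁ _ hc1 hc2
  obtain ⟨N, hN⟩ := card_le_sum hn₁ hL₂pos lam1 lam2 hfin1 hP1 hlam2 Λ
  refine hN.trans ?_
  rw [ballVol_succ]
  have hJ := capInt_pos (p := (n₁ : ℝ) / 2) (by positivity)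
  have hbv : 0 < ballVol n₁ := by
    have := Real.Gamma_pos_of_pos (by positivity : 0 < (n₁ : ℝ) / 2 + 1)
    unfold ballVol
    positivity
  set J := capInt ((n₁ : ℝ) / 2)
  set s := √Λ with hs
  have hs0 : 0 < s := Real.sqrt_pos.2 hΛ
  have hs2 : s ^ 2 = Λ := Real.sq_sqrt hΛ.le
  have hpow : Λ ^ (((n₁ : ℝ) + 1) / 2) = s ^ (n₁ + 1) := by
    rw [Real.rpow_div_two_eq_sqrt _ hΛ.le, ← Real.rpow_natCast]
    push_cast
    rfl
  rw [hpow]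
  set C := L₁ * ballVol n₁ / (2 * π) ^ n₁ with hC
  have hC0 : 0 < C := by positivity
  set M := L₂ * s / π with hM
  have hM0 : 0 < M := by positivity
  have hterm : ∀ k : ℕ, (max (Λ - π ^ 2 * ((k : ℝ) + 1) ^ 2 / L₂ ^ 2) 0) ^ ((n₁ : ℝ) / 2) =
      (π / L₂) ^ n₁ * (max (M ^ 2 - ((k : ℝ) + 1) ^ 2) 0) ^ ((n₁ : ℝ) / 2) := by
    intro k
    have e1 : max (Λ - π ^ 2 * ((k : ℝ) + 1) ^ 2 / L₂ ^ 2) 0 =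
        (π / L₂) ^ 2 * max (M ^ 2 - ((k : ℝ) + 1) ^ 2) 0 := by
      rw [mul_max_of_nonneg _ _ (by positivity), mul_zero]
      congr 1
      rw [hM, ← hs2]
      field_simp
    rw [e1, Real.mul_rpow (by positivity) (le_max_right _ _),
      Real.rpow_div_two_eq_sqrt _ (by positivity : (0 : ℝ) ≤ (π / L₂) ^ 2),
      Real.sqrt_sq (by positivity), Real.rpow_natCast]
  simp_rw [hterm]
  rw [← Finset.mul_sum, ← Finset.mul_sum]
  have hR : L₁ * L₂ * (ballVol n₁ * (2 * J)) / (2 * π) ^ (n₁ + 1) * s ^ (n₁ + 1) =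
      C * ((π / L₂) ^ n₁ * (J * M ^ (n₁ + 1))) := by
    rw [hC, hM, pow_succ (2 * π), pow_succ s, pow_succ (L₂ * s / π), div_pow, div_pow, mul_pow L₂ s]
    field_simp
  rw [hR, mul_assoc, mul_assoc]
  refine mul_le_mul_of_nonneg_left (mul_le_mul_of_nonneg_left ?_ (by positivity)) hC0.le
  rcases lt_or_ge M 1 with h | h
  · have : ∑ k ∈ Finset.range N, (max (M ^ 2 - ((k : ℝ) + 1) ^ 2) 0) ^ ((n₁ : ℝ) / 2) = 0 := by
      refine Finset.sum_eq_zero fun k _ => ?_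
      have hk : (0 : ℝ) ≤ k := k.cast_nonneg
      have hn : (0 : ℝ) < (n₁ : ℝ) / 2 := by positivity
      rw [max_eq_right (by nlinarith), Real.zero_rpow hn.ne']
    rw [this]
    exact mul_nonneg (by positivity) (le_max_right _ _)
  · refine (hlat M h N).trans ?_
    have e : J * M ^ (n₁ + 1) - C₁ n₁ * J / π * M ^ n₁ =
        J * M ^ (n₁ + 1) * (1 - C₁ n₁ / (L₂ * s)) := by
      have : L₂ * s = π * M := by rw [hM]; field_simp
      rw [this, pow_succ]
      field_simp
    rw [e]
    exact mul_le_mul_of_nonneg_left (le_max_left _ _) (by positivity)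
end
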